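/- Let γ=(B,M,S,A,Â) be a market with middlemen and γ*=(B,S,A*) the associated two-sided assignment market, with games v_γ and w_{γ*}. Then for every buyer i∈B and every seller k∈S, the marginal contributions in the two games coincide: mc_i(v_γ) = mc_i(w_{γ*}) and mc_k(v_γ) = mc_k(w_{γ*}). -/

import Mathlib

/-!
Matching markets with middlemen (Atay, Bahel, Solymosi).

Players are of three sorts: buyers `B`, middlemen `M`, sellers `S`
(three disjoint nonempty finite types); the player set is `Player B M S = B ⊕ M ⊕ S`.
An (functional representation of a) `T`-matching assigns to each buyer either nothing
(the buyer is single), a seller (direct trade), or a middleman together with a seller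
(mediated trade); distinct buyers get distinct sellers, and all agents involved lie in `T`.
A middleman may mediate several trades.
-/

open scoped Classical

noncomputable section

/-- The set of players of a market with middlemen: buyers `B`, middlemen `M`, sellers `S`. -/
abbrev Player (B M S : Type*) := B ⊕ M ⊕ S

/-- Functional representation of a matching in the market with middlemen: each buyer is
unmatched (`none`), matched directly to a seller (`some (none, k)`), or matched to a seller
through a middleman (`some (some j, k)`). -/
abbrev MMatch (B M S : Type*) := B → Option (Option M × S)

namespace Middlemen

variable {B M S : Type*}

/-- A buyer as a player. -/
def buyer (i : B) : Player B M S := Sum.inl i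

/-- A middleman as a player. -/
def mid (j : M) : Player B M S := Sum.inr (Sum.inl j)

/-- A seller as a player. -/
def seller (k : S) : Player B M S := Sum.inr (Sum.inr k)

/-- `f` is a `T`-matching in the market with middlemen: every basic coalition used by `f`
is contained in `T` and no seller is matched to two distinct buyers.  (Buyers, middlemen
and sellers of `T` not appearing in any trade are singletons of the matching.) -/
def IsMatching (T : Finset (Player B M S)) (f : MMatch B M S) : Prop :=
  (∀ i o k, f i = some (o, k) →
      buyer i ∈ T ∧ seller k ∈ T ∧ ∀ j, o = some j → mid j ∈ T) ∧
  (∀ i i' o o' k, f i = some (o, k) → f i' = some (o', k) → i = i')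

variable [Fintype B] [Fintype M] [Fintype S]

/-- The value `Σ_{(i,k)∈μ} a_{ik} + Σ_{(i,j,k)∈μ} â_{ijk}` of a matching in the market
with middlemen with direct-trade surplus matrix `A` and mediated-trade surpluses `Ah`. -/
def mval (A : B → S → ℝ) (Ah : B → M → S → ℝ) (f : MMatch B M S) : ℝ :=
  ∑ i, (match f i with
    | none => 0
    | some (none, k) => A i k
    | some (some j, k) => Ah i j k)

/-- The TU game `v_γ` associated with the market with middlemen `γ = (B,M,S,A,Ah)`:
the worth of a coalition `T` is the maximal value of a `T`-matching. -/
def vGame (A : B → S → ℝ) (Ah : B → M → S → ℝ) (T : Finset (Player B M S)) : ℝ :=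
  sSup { r | ∃ f : MMatch B M S, IsMatching T f ∧ r = mval A Ah f }

/-- `g` is a matching of the coalition `R` in a two-sided assignment market. -/
def IsMatching2 (R : Finset (B ⊕ S)) (g : B → Option S) : Prop :=
  (∀ i k, g i = some k → Sum.inl i ∈ R ∧ Sum.inr k ∈ R) ∧
  (∀ i i' k, g i = some k → g i' = some k → i = i')

/-- The value of a two-sided matching with valuation matrix `As`. -/
def m2val (As : B → S → ℝ) (g : B → Option S) : ℝ :=
  ∑ i, (match g i with
    | none => 0
    | some k => As i k)

/-- The assignment game `w_{γ*}` of the two-sided assignment market `(B,S,As)`. -/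
def wGame (As : B → S → ℝ) (R : Finset (B ⊕ S)) : ℝ :=
  sSup { r | ∃ g : B → Option S, IsMatching2 R g ∧ r = m2val As g }

/-- The matrix `A*` of the associated two-sided assignment market:
`a*_{ik} = max_{j ∈ M} â_{ijk}`. -/
def Astar [Nonempty M] (Ah : B → M → S → ℝ) (i : B) (k : S) : ℝ :=
  Finset.univ.sup' Finset.univ_nonempty fun j => Ah i j k

/-- The two-sided matching `μ*` induced by a matching `μ` of the market with middlemen:
keep all matched buyer–seller pairs (dropping the middlemen). -/
def star (f : MMatch B M S) : B → Option S := fun i => (f i).map Prod.snd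

/-- `m(i,k)`: the lowest-indexed middleman `j` maximizing `â_{ijk}`. -/
def bestMid [Nonempty M] [LinearOrder M] (Ah : B → M → S → ℝ) (i : B) (k : S) : M :=
  (Finset.univ.filter fun j => ∀ j' : M, Ah i j' k ≤ Ah i j k).min' (by
    obtain ⟨j, -, hj⟩ := Finset.exists_max_image (Finset.univ : Finset M)
      (fun j => Ah i j k) Finset.univ_nonempty
    exact ⟨j, Finset.mem_filter.mpr ⟨Finset.mem_univ _, fun j' => hj j' (Finset.mem_univ _)⟩⟩)

/-- The matching `σ^△` of the market with middlemen induced by a two-sided matching `σ`: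
each matched pair `{i,k}` of `σ` trades through the best middleman `m(i,k)`
(and every other middleman is a singleton). -/
def triangle [Nonempty M] [LinearOrder M] (Ah : B → M → S → ℝ) (g : B → Option S) :
    MMatch B M S :=
  fun i => (g i).map fun k => (some (bestMid Ah i k), k)

/-- The core of a TU game on the finite player set `P`. -/
def core {P : Type*} [Fintype P] (v : Finset P → ℝ) : Set (P → ℝ) :=
  { x | ∑ t, x t = v Finset.univ ∧ ∀ T : Finset P, v T ≤ ∑ t ∈ T, x t }

/-- Augment a payoff vector of the two-sided market with zero payoffs to all middlemen. -/
def aug (xz : B ⊕ S → ℝ) : Player B M S → ℝ := fun t =>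
  match t with
  | Sum.inl i => xz (Sum.inl i)
  | Sum.inr (Sum.inl _) => 0
  | Sum.inr (Sum.inr k) => xz (Sum.inr k)

/-- Restrict a payoff vector of the market with middlemen to the buyers and sellers. -/
def restrictBS (X : Player B M S → ℝ) : B ⊕ S → ℝ := fun t =>
  match t with
  | Sum.inl i => X (buyer i)
  | Sum.inr k => X (seller k)

/-- The set `T ∩ (B ∪ S)` of buyers and sellers of a coalition `T`. -/
def bsPart (T : Finset (Player B M S)) : Finset (B ⊕ S) :=
  Finset.univ.filter fun t =>
    match t with
    | Sum.inl i => buyer i ∈ T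
    | Sum.inr k => (seller k : Player B M S) ∈ T

/-- The coalition `R ∪ M` consisting of the buyers and sellers of `R` together with
all middlemen. -/
def withAllMid (R : Finset (B ⊕ S)) : Finset (Player B M S) :=
  Finset.univ.filter fun t =>
    match t with
    | Sum.inl i => Sum.inl i ∈ R
    | Sum.inr (Sum.inl _) => True
    | Sum.inr (Sum.inr k) => Sum.inr k ∈ R

end Middlemen

namespace Middlemen

/-!
A middleman can serve any number of trades, so in a coalition containing all middlemen every
buyer–seller pair can trade through its best middleman at once. Hence `v_γ(T) = w_{γ*}(T ∩ (B ∪ S))`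
for every `T ⊇ M`: `star` does not lower values, since no direct trade beats the best mediated one,
and `triangle` preserves them. The grand coalition, with or without one buyer or seller,
contains all middlemen.
-/

section MarketWithMiddlemen

variable {B M S : Type*}

section Coalitions

variable [Fintype B] [Fintype S]

theorem inl_mem_bsPart {T : Finset (Player B M S)} {i : B} :
    Sum.inl i ∈ bsPart T ↔ buyer i ∈ T := by
  simp [bsPart]

theorem inr_mem_bsPart {T : Finset (Player B M S)} {k : S} :
    Sum.inr k ∈ bsPart T ↔ seller k ∈ T := by
  simp [bsPart]

variable [Fintype M]

theorem bsPart_univ : bsPart (Finset.univ : Finset (Player B M S)) = Finset.univ := by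
  ext (i | k) <;> simp [inl_mem_bsPart, inr_mem_bsPart]

theorem bsPart_univ_erase_buyer (i : B) :
    bsPart ((Finset.univ : Finset (Player B M S)).erase (buyer i)) =
      Finset.univ.erase (Sum.inl i) := by
  ext (i' | k) <;> simp [inl_mem_bsPart, inr_mem_bsPart, buyer, seller]

theorem bsPart_univ_erase_seller (k : S) :
    bsPart ((Finset.univ : Finset (Player B M S)).erase (seller k)) =
      Finset.univ.erase (Sum.inr k) := by
  ext (i | k') <;> simp [inl_mem_bsPart, inr_mem_bsPart, buyer, seller]

end Coalitions

section BestMiddleman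

variable [Fintype M] [Nonempty M]

theorem le_Astar (Ah : B → M → S → ℝ) (i : B) (j : M) (k : S) : Ah i j k ≤ Astar Ah i k :=
  Finset.le_sup' (fun j => Ah i j k) (Finset.mem_univ j)

theorem le_bestMid [LinearOrder M] (Ah : B → M → S → ℝ) (i : B) (j : M) (k : S) :
    Ah i j k ≤ Ah i (bestMid Ah i k) k := by
  have isBest : bestMid Ah i k ∈ Finset.univ.filter fun j => ∀ j', Ah i j' k ≤ Ah i j k :=
    Finset.min'_mem _ _
  exact (Finset.mem_filter.mp isBest).2 j

theorem apply_bestMid [LinearOrder M] (Ah : B → M → S → ℝ) (i : B) (k : S) :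
    Ah i (bestMid Ah i k) k = Astar Ah i k :=
  (le_Astar Ah i _ k).antisymm (Finset.sup'_le _ _ fun j _ => le_bestMid Ah i j k)

end BestMiddleman

section Matchings

theorem isMatching_none (T : Finset (Player B M S)) : IsMatching T fun _ => none := by
  simp [IsMatching]

theorem isMatching2_none (R : Finset (B ⊕ S)) : IsMatching2 R fun _ => none := by
  simp [IsMatching2]

theorem star_eq_some_iff {f : MMatch B M S} {i : B} {k : S} :
    star f i = some k ↔ ∃ o, f i = some (o, k) := by
  simp [star]

theorem IsMatching.isMatching2_star [Fintype B] [Fintype S] {T : Finset (Player B M S)}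
    {f : MMatch B M S} (hf : IsMatching T f) : IsMatching2 (bsPart T) (star f) := by
  simp only [IsMatching2, star_eq_some_iff, inl_mem_bsPart, inr_mem_bsPart]
  constructor
  · rintro i k ⟨o, hik⟩
    obtain ⟨hi, hk, -⟩ := hf.1 i o k hik
    exact ⟨hi, hk⟩
  · rintro i i' k ⟨o, hik⟩ ⟨o', hi'k⟩
    exact hf.2 i i' o o' k hik hi'k

variable [Fintype M] [Nonempty M] [LinearOrder M]

theorem triangle_eq_some_iff {Ah : B → M → S → ℝ} {g : B → Option S} {i : B} {o : Option M}
    {k : S} : triangle Ah g i = some (o, k) ↔ g i = some k ∧ o = some (bestMid Ah i k) := by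
  simp only [triangle, Option.map_eq_some_iff, Prod.mk.injEq]
  constructor
  · rintro ⟨k', hik', rfl, rfl⟩
    exact ⟨hik', rfl⟩
  · rintro ⟨hik, rfl⟩
    exact ⟨k, hik, rfl, rfl⟩

theorem IsMatching2.isMatching_triangle [Fintype B] [Fintype S] {T : Finset (Player B M S)}
    {g : B → Option S} (hg : IsMatching2 (bsPart T) g) (hT : ∀ j, mid j ∈ T)
    (Ah : B → M → S → ℝ) : IsMatching T (triangle Ah g) := by
  simp only [IsMatching, triangle_eq_some_iff]
  constructor
  · rintro i o k ⟨hik, -⟩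
    obtain ⟨hi, hk⟩ := hg.1 i k hik
    exact ⟨inl_mem_bsPart.mp hi, inr_mem_bsPart.mp hk, fun j _ => hT j⟩
  · rintro i i' o o' k ⟨hik, -⟩ ⟨hi'k, -⟩
    exact hg.2 i i' k hik hi'k

end Matchings

section Values

variable [Fintype B] [Fintype M] [Nonempty M]

theorem mval_le_m2val_star {A : B → S → ℝ} {Ah : B → M → S → ℝ}
    (hA : ∀ i k, A i k ≤ Astar Ah i k) (f : MMatch B M S) :
    mval A Ah f ≤ m2val (Astar Ah) (star f) := by
  refine Finset.sum_le_sum fun i _ => ?_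
  simp only [star]
  rcases f i with _ | ⟨_ | j, k⟩
  · exact le_rfl
  · exact hA i k
  · exact le_Astar Ah i j k

theorem mval_triangle [LinearOrder M] (A : B → S → ℝ) (Ah : B → M → S → ℝ) (g : B → Option S) :
    mval A Ah (triangle Ah g) = m2val (Astar Ah) g := by
  refine Finset.sum_congr rfl fun i _ => ?_
  simp only [triangle]
  rcases g i with _ | k
  · rfl
  · exact apply_bestMid Ah i k

end Values

section Games

variable [Fintype B]

theorem IsMatching.mval_le_vGame [Finite M] [Finite S] {T : Finset (Player B M S)}
    {f : MMatch B M S} (hf : IsMatching T f) (A : B → S → ℝ) (Ah : B → M → S → ℝ) :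
    mval A Ah f ≤ vGame A Ah T := by
  refine le_csSup ((Set.finite_range (mval A Ah)).subset ?_).bddAbove ⟨f, hf, rfl⟩
  rintro _ ⟨f', -, rfl⟩
  exact Set.mem_range_self f'

theorem IsMatching2.m2val_le_wGame [Finite S] {R : Finset (B ⊕ S)} {g : B → Option S}
    (hg : IsMatching2 R g) (As : B → S → ℝ) : m2val As g ≤ wGame As R := by
  refine le_csSup ((Set.finite_range (m2val As)).subset ?_).bddAbove ⟨g, hg, rfl⟩
  rintro _ ⟨g', -, rfl⟩
  exact Set.mem_range_self g'

theorem vGame_le {A : B → S → ℝ} {Ah : B → M → S → ℝ} {T : Finset (Player B M S)} {r : ℝ}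
    (h : ∀ f, IsMatching T f → mval A Ah f ≤ r) : vGame A Ah T ≤ r := by
  refine csSup_le ⟨_, _, isMatching_none T, rfl⟩ ?_
  rintro _ ⟨f, hf, rfl⟩
  exact h f hf

theorem wGame_le {As : B → S → ℝ} {R : Finset (B ⊕ S)} {r : ℝ}
    (h : ∀ g, IsMatching2 R g → m2val As g ≤ r) : wGame As R ≤ r := by
  refine csSup_le ⟨_, _, isMatching2_none R, rfl⟩ ?_
  rintro _ ⟨g, hg, rfl⟩
  exact h g hg

variable [Fintype M] [Fintype S] [Nonempty M]

theorem vGame_le_wGame_bsPart {A : B → S → ℝ} {Ah : B → M → S → ℝ}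
    (hA : ∀ i k, A i k ≤ Astar Ah i k) (T : Finset (Player B M S)) :
    vGame A Ah T ≤ wGame (Astar Ah) (bsPart T) :=
  vGame_le fun f hf =>
    (mval_le_m2val_star hA f).trans (hf.isMatching2_star.m2val_le_wGame (Astar Ah))

theorem wGame_bsPart_le_vGame (A : B → S → ℝ) (Ah : B → M → S → ℝ) {T : Finset (Player B M S)}
    (hT : ∀ j, mid j ∈ T) : wGame (Astar Ah) (bsPart T) ≤ vGame A Ah T := by
  -- `triangle` breaks ties between best middlemen by a linear order; any one will do.
  let : LinearOrder M := IsWellOrder.linearOrder WellOrderingRel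
  refine wGame_le fun g hg => ?_
  rw [← mval_triangle A Ah g]
  exact (hg.isMatching_triangle hT Ah).mval_le_vGame A Ah

theorem vGame_eq_wGame_bsPart {A : B → S → ℝ} {Ah : B → M → S → ℝ}
    (hA : ∀ i k, A i k ≤ Astar Ah i k) {T : Finset (Player B M S)} (hT : ∀ j, mid j ∈ T) :
    vGame A Ah T = wGame (Astar Ah) (bsPart T) :=
  (vGame_le_wGame_bsPart hA T).antisymm (wGame_bsPart_le_vGame A Ah hT)

theorem marginal_contributions_eq_general (A : B → S → ℝ) (Ah : B → M → S → ℝ)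
    (hA : ∀ i k, A i k ≤ Astar Ah i k) :
    (∀ i : B, vGame A Ah Finset.univ - vGame A Ah (Finset.univ.erase (buyer i)) =
        wGame (Astar Ah) Finset.univ - wGame (Astar Ah) (Finset.univ.erase (Sum.inl i))) ∧
    (∀ k : S, vGame A Ah Finset.univ - vGame A Ah (Finset.univ.erase (seller k)) =
        wGame (Astar Ah) Finset.univ - wGame (Astar Ah) (Finset.univ.erase (Sum.inr k))) := by
  have grand_coalition : vGame A Ah Finset.univ = wGame (Astar Ah) Finset.univ := by
    rw [vGame_eq_wGame_bsPart hA fun j => Finset.mem_univ _, bsPart_univ]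
  refine ⟨fun i => ?_, fun k => ?_⟩
  · have mid_mem (j : M) : mid j ∈ (Finset.univ : Finset (Player B M S)).erase (buyer i) := by
      simp [mid, buyer]
    rw [grand_coalition, vGame_eq_wGame_bsPart hA mid_mem, bsPart_univ_erase_buyer]
  · have mid_mem (j : M) : mid j ∈ (Finset.univ : Finset (Player B M S)).erase (seller k) := by
      simp [mid, seller]
    rw [grand_coalition, vGame_eq_wGame_bsPart hA mid_mem, bsPart_univ_erase_seller]

end Games

end MarketWithMiddlemen

/-- for every buyer and every seller, the marginal contribution in the
middlemen market game `v_γ` coincides with that in the assignment game `w_γ*`. -/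
theorem marginal_contributions_eq
    {B M S : Type*} [Fintype B] [Fintype M] [Fintype S]
    [Nonempty B] [Nonempty M] [Nonempty S]
    (A : B → S → ℝ) (Ah : B → M → S → ℝ)
    (hA : ∀ i k, 0 ≤ A i k) (hAh : ∀ i j k, A i k ≤ Ah i j k) :
    (∀ i : B, vGame A Ah Finset.univ - vGame A Ah (Finset.univ.erase (buyer i)) =
        wGame (Astar Ah) Finset.univ - wGame (Astar Ah) (Finset.univ.erase (Sum.inl i))) ∧
    (∀ k : S, vGame A Ah Finset.univ - vGame A Ah (Finset.univ.erase (seller k)) =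
        wGame (Astar Ah) Finset.univ - wGame (Astar Ah) (Finset.univ.erase (Sum.inr k))) := by
  exact marginal_contributions_eq_general A Ah fun i k =>
    (hAh i (Classical.arbitrary M) k).trans (le_Astar Ah i _ k)

end Middlemen
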